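/- For all FNM guarded processes p, q and every input action a ∈ L, the following laws of strong prefixing hold up to structure-preserving bisimilarity: a̲.(p + q) ~sp a̲.p + a̲.q (distribution); a̲.τ.p ~sp a.p (absorption); and if p ~sp 0 + 0 or p = 0, then a̲.p ~sp 0 + 0 (annihilation). -/

import Mathlib

/-- Actions of FNM: the invisible action τ, input actions `a ∈ L` and
output actions `ā ∈ L̄` (here `α` plays the role of the finite set `L`). -/
inductive Act (α : Type) where
  | tau : Act α
  | inp : α → Act α
  | out : α → Act α
  deriving DecidableEq

/-- (Open) FNM terms: `0`, the variable `x`, action prefixing `mu.t`, strong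
prefixing `a̲.s`, choice `s+s`, constants `C`, parallel `t|t` and
restriction `(νa)p`.  The syntactic categories are carved out below. -/
inductive FNM (α κ : Type) where
  | nil : FNM α κ
  | var : FNM α κ
  | pref : Act α → FNM α κ → FNM α κ
  | spref : α → FNM α κ → FNM α κ
  | sum : FNM α κ → FNM α κ → FNM α κ
  | const : κ → FNM α κ
  | par : FNM α κ → FNM α κ → FNM α κ
  | res : α → FNM α κ → FNM α κ
  deriving DecidableEq

namespace FNM

variable {α κ : Type}

mutual
  /-- Guarded terms: syntactic category `s ::= 0 | mu.t | a̲.s | s+s`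
  (with `t` restriction-free). -/
  def Grd : FNM α κ → Prop
    | .nil => True
    | .var => False
    | .pref _ t => RF t
    | .spref _ s => Grd s
    | .sum s1 s2 => Grd s1 ∧ Grd s2
    | .const _ => False
    | .par _ _ => False
    | .res _ _ => False
  /-- Restriction-free terms: syntactic category `t ::= q | t|t`, where
  `q ::= s | C | x` is the category of sequential terms. -/
  def RF : FNM α κ → Prop
    | .nil => True
    | .var => True
    | .pref _ t => RF t
    | .spref _ s => Grd s
    | .sum s1 s2 => Grd s1 ∧ Grd s2
    | .const _ => True
    | .par t1 t2 => RF t1 ∧ RF t2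
    | .res _ _ => False
end

/-- Sequential terms: `q ::= s | C | x`. -/
def Seq (t : FNM α κ) : Prop :=
  Grd t ∨ (∃ c, t = FNM.const c) ∨ t = FNM.var

/-- General terms: `p ::= t | (νa)p`. -/
def Gen : FNM α κ → Prop
  | .res _ p => Gen p
  | t => RF t

/-- Closed terms: no occurrence of the variable. -/
def VarFree : FNM α κ → Prop
  | .nil => True
  | .var => False
  | .pref _ t => VarFree t
  | .spref _ s => VarFree s
  | .sum s1 s2 => VarFree s1 ∧ VarFree s2
  | .const _ => True
  | .par t1 t2 => VarFree t1 ∧ VarFree t2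
  | .res _ p => VarFree p

/-- Substitution `p{r/x}` of the term `r` for every occurrence of the
variable `x` in `p` (constants are dealt with via the environment). -/
def subst (r : FNM α κ) : FNM α κ → FNM α κ
  | .nil => .nil
  | .var => r
  | .pref mu t => .pref mu (subst r t)
  | .spref a s => .spref a (subst r s)
  | .sum s1 s2 => .sum (subst r s1) (subst r s2)
  | .const c => .const c
  | .par t1 t2 => .par (subst r t1) (subst r t2)
  | .res a p => .res a (subst r p)

/-- `mu` uses the name `a`. -/
def _root_.Act.uses (a : α) : Act α → Prop
  | .tau => False
  | .inp b => b = a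
  | .out b => b = a

/-- `a` occurs free in a term (through an environment `env` giving the body
of each process constant). -/
inductive FreeIn (env : κ → FNM α κ) (a : α) : FNM α κ → Prop where
  | pref_act {mu : Act α} {t : FNM α κ} : mu.uses a → FreeIn env a (.pref mu t)
  | pref_cont {mu : Act α} {t : FNM α κ} : FreeIn env a t → FreeIn env a (.pref mu t)
  | spref_act {s : FNM α κ} : FreeIn env a (.spref a s)
  | spref_cont {b : α} {s : FNM α κ} : FreeIn env a s → FreeIn env a (.spref b s)
  | sum_l {s1 s2 : FNM α κ} : FreeIn env a s1 → FreeIn env a (.sum s1 s2)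
  | sum_r {s1 s2 : FNM α κ} : FreeIn env a s2 → FreeIn env a (.sum s1 s2)
  | par_l {t1 t2 : FNM α κ} : FreeIn env a t1 → FreeIn env a (.par t1 t2)
  | par_r {t1 t2 : FNM α κ} : FreeIn env a t2 → FreeIn env a (.par t1 t2)
  | res {b : α} {p : FNM α κ} : a ≠ b → FreeIn env a p → FreeIn env a (.res b p)
  | const {c : κ} : FreeIn env a (env c) → FreeIn env a (.const c)

/-- `a` occurs bound (by a restriction) in a term. -/
inductive BoundIn (env : κ → FNM α κ) (a : α) : FNM α κ → Prop where
  | res_here {p : FNM α κ} : BoundIn env a (.res a p)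
  | res_in {b : α} {p : FNM α κ} : BoundIn env a p → BoundIn env a (.res b p)
  | pref {mu : Act α} {t : FNM α κ} : BoundIn env a t → BoundIn env a (.pref mu t)
  | spref {b : α} {s : FNM α κ} : BoundIn env a s → BoundIn env a (.spref b s)
  | sum_l {s1 s2 : FNM α κ} : BoundIn env a s1 → BoundIn env a (.sum s1 s2)
  | sum_r {s1 s2 : FNM α κ} : BoundIn env a s2 → BoundIn env a (.sum s1 s2)
  | par_l {t1 t2 : FNM α κ} : BoundIn env a t1 → BoundIn env a (.par t1 t2)
  | par_r {t1 t2 : FNM α κ} : BoundIn env a t2 → BoundIn env a (.par t1 t2)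
  | const {c : κ} : BoundIn env a (env c) → BoundIn env a (.const c)

end FNM

/-- A place of the net `N_FNM`: a sequential (extended) term, rendered as a
pure sequential term together with the record `ρ : α → Bool` of which names
have been replaced by their restricted counterparts (`ρ a = true` represents
the substitution `{a'/a}`). -/
abbrev Place (α κ : Type) := FNM α κ × (α → Bool)

namespace FNM

variable {α κ : Type} [DecidableEq α] [DecidableEq κ] [Fintype α]

/-- The decomposition function `dec`, mapping (extended) terms to markings:
`dec(0) = θ`, `dec(p|q) = dec(p) ⊕ dec(q)`, `dec((νa)p) = dec(p){a'/a}`, and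
a sequential term other than `0` is mapped to a single place. -/
def dec (ρ : α → Bool) : FNM α κ → Multiset (Place α κ)
  | .nil => 0
  | .par t1 t2 => dec ρ t1 + dec ρ t2
  | .res a p => dec (Function.update ρ a true) p
  | t => {(t, ρ)}

end FNM

/-- Extended visible actions: inputs and outputs, possibly restricted
(`inp a true` represents `a'`, `out a false` represents `ā`, etc.). -/
inductive XAct (α : Type) where
  | inp : α → Bool → XAct α
  | out : α → Bool → XAct α

/-- Labels of net transitions: `τ` is the empty sequence, and otherwise a
sequence of extended actions. -/
abbrev Lbl (α : Type) := List (XAct α)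

/-- An extended action carries no restricted name. -/
def XAct.unres {α : Type} : XAct α → Prop
  | .inp _ r => r = false
  | .out _ r => r = false

/-- The label contributed by prefix `mu` under the restriction record `ρ`. -/
def actL {α : Type} (ρ : α → Bool) : Act α → Lbl α
  | .tau => []
  | .inp a => [XAct.inp a (ρ a)]
  | .out a => [XAct.out a (ρ a)]

/-- The synchronization relation `Sync(σ1, σ2, σ)`: `Sync(α, ᾱ, τ)`,
`Sync(aσ, ā, σ)` and `Sync(ā, aσ, σ)` for `σ ≠ ε` (also on restricted
actions). -/
inductive Sync {α : Type} : Lbl α → Lbl α → Lbl α → Prop where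
  | inout (a : α) (r : Bool) : Sync [XAct.inp a r] [XAct.out a r] []
  | outin (a : α) (r : Bool) : Sync [XAct.out a r] [XAct.inp a r] []
  | seqL (a : α) (r : Bool) (σ : Lbl α) :
      σ ≠ [] → Sync (XAct.inp a r :: σ) [XAct.out a r] σ
  | seqR (a : α) (r : Bool) (σ : Lbl α) :
      σ ≠ [] → Sync [XAct.out a r] (XAct.inp a r :: σ) σ

namespace FNM

variable {α κ : Type} [DecidableEq α] [DecidableEq κ] [Fintype α]

/-- A marking is admissible if for no name `a` both `a` and its restricted
counterpart `a'` occur free in it. -/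
def Adm (env : κ → FNM α κ) (m : Multiset (Place α κ)) : Prop :=
  ∀ a : α, ¬ ((∃ p ∈ m, FreeIn env a p.1 ∧ p.2 a = false) ∧
              (∃ p ∈ m, FreeIn env a p.1 ∧ p.2 a = true))

/-- The net transitions of `N_FNM`, generated by the rules (pref), (sum₁),
(sum₂), (cons), (s-pref) and (s-com). -/
inductive Tr (env : κ → FNM α κ) :
    Multiset (Place α κ) → Lbl α → Multiset (Place α κ) → Prop where
  | pref (ρ : α → Bool) (mu : Act α) (t : FNM α κ) :
      Tr env {(FNM.pref mu t, ρ)} (actL ρ mu) (dec ρ t)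
  | sum1 (ρ : α → Bool) (s1 s2 : FNM α κ) (σ : Lbl α) (m : Multiset (Place α κ)) :
      Tr env (dec ρ s1) σ m → Tr env {(FNM.sum s1 s2, ρ)} σ m
  | sum2 (ρ : α → Bool) (s1 s2 : FNM α κ) (σ : Lbl α) (m : Multiset (Place α κ)) :
      Tr env (dec ρ s2) σ m → Tr env {(FNM.sum s1 s2, ρ)} σ m
  | cons (ρ : α → Bool) (c : κ) (σ : Lbl α) (m : Multiset (Place α κ)) :
      Tr env (dec ρ (env c)) σ m → Tr env {(FNM.const c, ρ)} σ m
  | spref (ρ : α → Bool) (a : α) (s : FNM α κ) (σ : Lbl α) (m : Multiset (Place α κ)) :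
      Tr env (dec ρ s) σ m →
      Tr env {(FNM.spref a s, ρ)} (XAct.inp a (ρ a) :: σ) m
  | scom (m1 m2 m1' m2' : Multiset (Place α κ)) (σ1 σ2 σ : Lbl α) :
      Tr env m1 σ1 m1' → Tr env m2 σ2 m2' →
      Adm env (m1 + m2) → Sync σ1 σ2 σ →
      Tr env (m1 + m2) σ (m1' + m2')

/-- Tritions of the net `N_FNM`: only those whose label contains no
restricted action are kept. -/
def NetTr (env : κ → FNM α κ) (m : Multiset (Place α κ)) (σ : Lbl α)
    (m' : Multiset (Place α κ)) : Prop :=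
  Tr env m σ m' ∧ ∀ x ∈ σ, x.unres

/-- First projection of a linking. -/
def pi1 (l : Multiset (Place α κ × Place α κ)) : Multiset (Place α κ) :=
  l.map Prod.fst

/-- Second projection of a linking. -/
def pi2 (l : Multiset (Place α κ × Place α κ)) : Multiset (Place α κ) :=
  l.map Prod.snd

/-- Structure-preserving bisimulation on the net `N_FNM`. -/
def IsSPB (env : κ → FNM α κ) (R : Set (Multiset (Place α κ × Place α κ))) : Prop :=
  ∀ l ∈ R, ∀ c ≤ l,
    (∀ σ m1, NetTr env (pi1 c) σ m1 →
      ∃ m2 cb, NetTr env (pi2 c) σ m2 ∧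
        pi1 cb = m1 ∧ pi2 cb = m2 ∧ l - c + cb ∈ R) ∧
    (∀ σ m2, NetTr env (pi2 c) σ m2 →
      ∃ m1 cb, NetTr env (pi1 c) σ m1 ∧
        pi1 cb = m1 ∧ pi2 cb = m2 ∧ l - c + cb ∈ R)

/-- `p ~sp q`: some structure-preserving bisimulation contains a linking
projecting on `dec(p)` and `dec(q)`. -/
def SPEq (env : κ → FNM α κ) (p q : FNM α κ) : Prop :=
  ∃ R, IsSPB env R ∧ ∃ l ∈ R,
    pi1 l = dec (fun _ => false) p ∧ pi2 l = dec (fun _ => false) q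

end FNM

namespace FNM

section Helpers

variable {α κ : Type} [DecidableEq α]

theorem Tr.card_pos {env : κ → FNM α κ} {m m' : Multiset (Place α κ)} {σ : Lbl α}
    (h : Tr env m σ m') : 0 < m.card := by
  induction h with
  | scom m1 m2 m1' m2' σ1 σ2 σ h1 h2 ha hs ih1 ih2 =>
    rw [Multiset.card_add]; omega
  | _ => simp

theorem Tr.not_zero {env : κ → FNM α κ} {m' : Multiset (Place α κ)} {σ : Lbl α}
    (h : Tr env 0 σ m') : False := by
  simpa using h.card_pos

theorem tr_single {env : κ → FNM α κ} {M m : Multiset (Place α κ)} {σ : Lbl α}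
    (h : Tr env M σ m) (x : FNM α κ) (ρ : α → Bool) (hM : M = {(x, ρ)}) :
    (∃ mu t, x = .pref mu t ∧ σ = actL ρ mu ∧ m = dec ρ t) ∨
    (∃ s1 s2, x = .sum s1 s2 ∧ (Tr env (dec ρ s1) σ m ∨ Tr env (dec ρ s2) σ m)) ∨
    (∃ c, x = .const c) ∨
    (∃ a s σ', x = .spref a s ∧ σ = XAct.inp a (ρ a) :: σ' ∧ Tr env (dec ρ s) σ' m) := by
  cases h with
  | pref ρ' mu t =>
    simp only [Multiset.singleton_inj, Prod.mk.injEq] at hM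
    obtain ⟨rfl, rfl⟩ := hM
    exact Or.inl ⟨_, _, rfl, rfl, rfl⟩
  | sum1 ρ' s1 s2 _ _ h =>
    simp only [Multiset.singleton_inj, Prod.mk.injEq] at hM
    obtain ⟨rfl, rfl⟩ := hM
    exact Or.inr (Or.inl ⟨_, _, rfl, Or.inl h⟩)
  | sum2 ρ' s1 s2 _ _ h =>
    simp only [Multiset.singleton_inj, Prod.mk.injEq] at hM
    obtain ⟨rfl, rfl⟩ := hM
    exact Or.inr (Or.inl ⟨_, _, rfl, Or.inr h⟩)
  | cons ρ' c _ _ h =>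
    simp only [Multiset.singleton_inj, Prod.mk.injEq] at hM
    obtain ⟨rfl, rfl⟩ := hM
    exact Or.inr (Or.inr (Or.inl ⟨_, rfl⟩))
  | spref ρ' a s σ' _ h =>
    simp only [Multiset.singleton_inj, Prod.mk.injEq] at hM
    obtain ⟨rfl, rfl⟩ := hM
    exact Or.inr (Or.inr (Or.inr ⟨_, _, _, rfl, rfl, h⟩))
  | scom m1 m2 m1' m2' σ1 σ2 _ h1 h2 _ _ =>
    have e := congrArg Multiset.card hM
    have := h1.card_pos
    have := h2.card_pos
    rw [Multiset.card_add, Multiset.card_singleton] at e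
    omega

theorem tr_sum {env : κ → FNM α κ} {m : Multiset (Place α κ)} {σ : Lbl α}
    {p q : FNM α κ} {ρ : α → Bool} :
    Tr env {(FNM.sum p q, ρ)} σ m ↔ (Tr env (dec ρ p) σ m ∨ Tr env (dec ρ q) σ m) := by
  constructor
  · intro h
    rcases tr_single h _ _ rfl with ⟨_, _, e, _⟩ | ⟨_, _, e, h⟩ | ⟨_, e⟩ | ⟨_, _, _, e, _⟩ <;> cases e
    exact h
  · rintro (h | h)
    · exact .sum1 _ _ _ _ _ h
    · exact .sum2 _ _ _ _ _ h

theorem tr_spref {env : κ → FNM α κ} {m : Multiset (Place α κ)} {σ : Lbl α}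
    {a : α} {p : FNM α κ} {ρ : α → Bool} :
    Tr env {(FNM.spref a p, ρ)} σ m ↔
      ∃ σ', σ = XAct.inp a (ρ a) :: σ' ∧ Tr env (dec ρ p) σ' m := by
  constructor
  · intro h
    rcases tr_single h _ _ rfl with ⟨_, _, e, _⟩ | ⟨_, _, e, h⟩ | ⟨_, e⟩ | ⟨_, _, _, e, h⟩ <;> cases e
    exact ⟨_, h⟩
  · rintro ⟨σ', rfl, h⟩
    exact .spref _ _ _ _ _ h

theorem tr_pref {env : κ → FNM α κ} {m : Multiset (Place α κ)} {σ : Lbl α}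
    {mu : Act α} {p : FNM α κ} {ρ : α → Bool} :
    Tr env {(FNM.pref mu p, ρ)} σ m ↔ (σ = actL ρ mu ∧ m = dec ρ p) := by
  constructor
  · intro h
    rcases tr_single h _ _ rfl with ⟨_, _, e, h⟩ | ⟨_, _, e, _⟩ | ⟨_, e⟩ | ⟨_, _, _, e, _⟩ <;> cases e
    exact h
  · rintro ⟨rfl, rfl⟩
    exact .pref _ _ _

theorem speq_of_places [DecidableEq κ] [Fintype α] {env : κ → FNM α κ} {p q : FNM α κ} {x y : Place α κ}
    (hx : dec (fun _ => false) p = {x}) (hy : dec (fun _ => false) q = {y})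
    (h : ∀ σ m, NetTr env {x} σ m ↔ NetTr env {y} σ m) : SPEq env p q := by
  have hd : ∀ m : Multiset (Place α κ),
      ∀ z ∈ m.map (fun z => (z, z)), z.1 = z.2 := by
    intro m z hz
    simp only [Multiset.mem_map] at hz
    obtain ⟨w, _, rfl⟩ := hz
    rfl
  refine ⟨{l | l = {(x, y)} ∨ ∀ z ∈ l, z.1 = z.2}, ?_, {(x, y)}, Or.inl rfl, ?_, ?_⟩
  · have key : ∀ l : Multiset (Place α κ × Place α κ), (l = {(x, y)} ∨ ∀ z ∈ l, z.1 = z.2) →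
        ∀ c ≤ l, ∀ σ m, (NetTr env (pi1 c) σ m ↔ NetTr env (pi2 c) σ m) ∧
          (NetTr env (pi1 c) σ m → ∀ z ∈ l - c, z.1 = z.2) := by
      rintro l (rfl | hl) c hc σ m
      · rw [Multiset.le_singleton] at hc
        rcases hc with rfl | rfl
        · exact ⟨Iff.rfl, fun h => (Tr.not_zero h.1).elim⟩
        · exact ⟨by simpa [pi1, pi2] using h σ m, fun _ => by simp⟩
      · have e : pi1 c = pi2 c :=
          Multiset.map_congr rfl fun z hz => hl z (Multiset.mem_of_le hc hz)
        exact ⟨by rw [e], fun _ z hz => hl z (Multiset.mem_of_le (Multiset.sub_le_self _ _) hz)⟩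
    intro l hl c hc
    have fin : ∀ σ m, NetTr env (pi1 c) σ m →
        (∀ z ∈ l - c + m.map (fun z => (z, z)), z.1 = z.2) := by
      intro σ m ht z hz
      rcases Multiset.mem_add.1 hz with hz | hz
      · exact (key l hl c hc σ m).2 ht z hz
      · exact hd m z hz
    refine ⟨fun σ m ht => ?_, fun σ m ht => ?_⟩
    · exact ⟨m, m.map (fun z => (z, z)), (key l hl c hc σ m).1.1 ht, by simp [pi1], by simp [pi2],
        Or.inr (fin σ m ht)⟩
    · have ht' := (key l hl c hc σ m).1.2 ht
      exact ⟨m, m.map (fun z => (z, z)), ht', by simp [pi1], by simp [pi2],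
        Or.inr (fin σ m ht')⟩
  · simp [pi1, hx]
  · simp [pi2, hy]

theorem not_tr_stuck {env : κ → FNM α κ} {m : Multiset (Place α κ)} {σ : Lbl α}
    {ρ : α → Bool} : ¬ Tr env {((FNM.sum .nil .nil : FNM α κ), ρ)} σ m := by
  rw [tr_sum]
  rintro (h | h) <;> exact Tr.not_zero h

end Helpers

end FNM

open FNM in
/-- laws of the strong prefixing operator, up to
structure-preserving bisimilarity: distribution
`a̲.(p + q) ~sp a̲.p + a̲.q`, absorption `a̲.τ.p ~sp a.p`, and annihilation
(if `p ~sp 0 + 0` or `p = 0` then `a̲.p ~sp 0 + 0`), for all FNM guarded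
processes `p, q` and every input action `a`. -/
theorem speq_strong_prefix_laws {α κ : Type} [DecidableEq α] [DecidableEq κ]
    [Fintype α] [Finite κ]
    (env : κ → FNM α κ) (henv : ∀ c, Grd (env c) ∧ VarFree (env c))
    (a : α) (p q : FNM α κ) (hp : Grd p) (hq : Grd q)
    (hpv : VarFree p) (hqv : VarFree q) :
    SPEq env (FNM.spref a (FNM.sum p q))
      (FNM.sum (FNM.spref a p) (FNM.spref a q)) ∧
    SPEq env (FNM.spref a (FNM.pref Act.tau p)) (FNM.pref (Act.inp a) p) ∧
    ((p = FNM.nil ∨ SPEq env p (FNM.sum FNM.nil FNM.nil)) →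
      SPEq env (FNM.spref a p) (FNM.sum FNM.nil FNM.nil)) := by
  refine ⟨?_, ?_, ?_⟩
  · refine speq_of_places (x := (_, _)) (y := (_, _)) (by rw [dec]; all_goals simp) (by rw [dec]; all_goals simp) fun σ m => and_congr_left fun _ => ?_
    simp only [tr_spref, tr_sum, dec]
    constructor
    · rintro ⟨σ', rfl, h | h⟩
      · exact Or.inl ⟨_, rfl, h⟩
      · exact Or.inr ⟨_, rfl, h⟩
    · rintro (⟨σ', rfl, h⟩ | ⟨σ', rfl, h⟩)
      · exact ⟨_, rfl, Or.inl h⟩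
      · exact ⟨_, rfl, Or.inr h⟩
  · refine speq_of_places (x := (_, _)) (y := (_, _)) (by rw [dec]; all_goals simp) (by rw [dec]; all_goals simp) fun σ m => and_congr_left fun _ => ?_
    simp only [tr_spref, tr_pref, dec, actL]
    constructor
    · rintro ⟨σ', rfl, rfl, rfl⟩
      exact ⟨rfl, rfl⟩
    · rintro ⟨rfl, rfl⟩
      exact ⟨_, rfl, rfl, rfl⟩
  · intro h
    have stuck : ∀ σ m, ¬ NetTr env (dec (fun _ => false) p) σ m := by
      intro σ m ht
      rcases h with rfl | ⟨R, hR, l, hl, h1, h2⟩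
      · exact Tr.not_zero ht.1
      · rw [← h1] at ht
        obtain ⟨m2, cb, ht2, _⟩ := (hR l hl l le_rfl).1 σ m ht
        rw [h2] at ht2
        exact not_tr_stuck ht2.1
    refine speq_of_places (x := (_, _)) (y := (_, _)) (by rw [dec]; all_goals simp) (by rw [dec]; all_goals simp) fun σ m => ⟨fun ht => ?_, fun ht => (not_tr_stuck ht.1).elim⟩
    obtain ⟨ht, hu⟩ := ht
    obtain ⟨σ', rfl, htp⟩ := tr_spref.1 ht
    exact (stuck σ' m ⟨htp, fun x hx => hu x (List.mem_cons_of_mem _ hx)⟩).elim
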